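/- Let d ≥ 1 and define f : ℝ^d → ℝ by f(x) = (2π)^{−d} ∫_{ℝ^d} e^{−|ξ|⁴} e^{i ξ·x} dξ (the integral is absolutely convergent and the result is real-valued). Then ∫_{ℝ^d} |f(x)| dx > 1. -/

import Mathlib

open Real MeasureTheory Set Filter
open scoped ENNReal

noncomputable section

/-- `ℝ^d` with the Euclidean norm. -/
abbrev Ed (d : ℕ) := EuclideanSpace ℝ (Fin d)

/-- The fundamental domain `[-π,π]^d` of the torus `𝕋^d = ℝ^d/2πℤ^d`. -/
def Qd (d : ℕ) : Set (Ed d) := {x | ∀ i, |x i| ≤ Real.pi}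

/-- The partial derivative `∂_{x_j} f` of `f : ℝ^d → ℝ`. -/
noncomputable def pd {d : ℕ} (f : Ed d → ℝ) (j : Fin d) (x : Ed d) : ℝ :=
  fderiv ℝ f x (EuclideanSpace.single j 1)

/-- `|∇f|²`, the squared Euclidean norm of the spatial gradient. -/
noncomputable def gradSq {d : ℕ} (f : Ed d → ℝ) (x : Ed d) : ℝ := ∑ j, pd f j x ^ 2

/-- `|∇f|`, the Euclidean norm of the spatial gradient. -/
noncomputable def gradNorm {d : ℕ} (f : Ed d → ℝ) (x : Ed d) : ℝ := Real.sqrt (gradSq f x)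

/-- The Laplacian `Δf = Σ_j ∂_{x_j}∂_{x_j} f`. -/
noncomputable def lapl {d : ℕ} (f : Ed d → ℝ) (x : Ed d) : ℝ := ∑ j, pd (pd f j) j x

/-- The slope-selection divergence term `∇·((|∇f|²−1)∇f) = Σ_j ∂_{x_j}((|∇f|²−1)∂_{x_j}f)`. -/
noncomputable def slopeDiv {d : ℕ} (f : Ed d → ℝ) (x : Ed d) : ℝ :=
  ∑ j, pd (fun y => (gradSq f y - 1) * pd f j y) j x

/-- `f` is `2π`-periodic in each coordinate. -/
def PeriodicSpace {d : ℕ} (f : Ed d → ℝ) : Prop :=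
  ∀ (j : Fin d) (x : Ed d), f (x + (2 * Real.pi) • EuclideanSpace.single j 1) = f x

/-- The biharmonic heat kernel `f(x) = (2π)^{−d} ∫_{ℝ^d} e^{−|ξ|⁴} e^{i ξ·x} dξ`
(the inverse Fourier transform of `e^{−|ξ|⁴}`). -/
noncomputable def biKernel (d : ℕ) (x : Ed d) : ℂ :=
  ((2 * Real.pi) ^ d)⁻¹ •
    ∫ ξ : Ed d, Complex.exp (Complex.I * (∑ i, (ξ i : ℂ) * (x i : ℂ)) - ((‖ξ‖ ^ 4 : ℝ) : ℂ))

/-- `C_d = ‖f‖_{L¹(ℝ^d)}` where `f` is the inverse Fourier transform of `e^{−|ξ|⁴}`. -/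
noncomputable def Cd (d : ℕ) : ℝ := ∫ x : Ed d, ‖biKernel d x‖

open scoped ContDiff SchwartzMap FourierTransform

lemma gauss_mono (m : ℕ) : ∃ C : ℝ, ∀ x : ℝ, |x| ^ m * Real.exp (-(x ^ 2 / 2)) ≤ C := by
  refine ⟨1 + 2 ^ m * m.factorial, fun x => ?_⟩
  have h1 : |x| ^ m ≤ 1 + (x ^ 2) ^ m := by
    have : (x^2)^m = (|x|^m)^2 := by rw [← sq_abs, ← pow_mul, ← pow_mul, mul_comm]
    rw [this]; nlinarith [sq_nonneg (|x| ^ m - 1), pow_nonneg (abs_nonneg x) m]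
  have h2 := Real.pow_div_factorial_le_exp (x ^ 2 / 2) (by positivity) m
  rw [div_pow, div_div, div_le_iff₀ (by positivity)] at h2
  have h3 : (1:ℝ) ≤ Real.exp (x ^ 2 / 2) := Real.one_le_exp (by positivity)
  rw [Real.exp_neg, ← div_eq_mul_inv, div_le_iff₀ (by positivity)]
  linarith

lemma gauss_poly (k : ℕ) (p : Polynomial ℤ) :
    ∃ C : ℝ, ∀ x : ℝ, |x| ^ k * |Polynomial.aeval x p| * Real.exp (-(x ^ 2 / 2)) ≤ C := by
  induction p using Polynomial.induction_on' with
  | add p q hp hq =>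
    obtain ⟨C, hC⟩ := hp
    obtain ⟨D, hD⟩ := hq
    refine ⟨C + D, fun x => ?_⟩
    refine le_trans ?_ (add_le_add (hC x) (hD x))
    rw [← add_mul, ← mul_add, map_add]
    gcongr
    exact abs_add_le _ _
  | monomial n a =>
    obtain ⟨C, hC⟩ := gauss_mono (k + n)
    refine ⟨|(a:ℝ)| * C, fun x => ?_⟩
    refine le_trans (le_of_eq ?_) (mul_le_mul_of_nonneg_left (hC x) (abs_nonneg (a:ℝ)))
    simp [Polynomial.aeval_monomial, abs_mul, abs_pow, pow_add]
    ring

def gaussS : 𝓢(ℝ, ℝ) where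
  toFun := fun y => Real.exp (-(y ^ 2 / 2))
  smooth' := by fun_prop
  decay' := by
    intro k n
    obtain ⟨C, hC⟩ := gauss_poly k (Polynomial.hermite n)
    refine ⟨C, fun x => le_trans (le_of_eq ?_) (hC x)⟩
    rw [norm_iteratedFDeriv_eq_norm_iteratedDeriv, iteratedDeriv_eq_iterate,
      Polynomial.deriv_gaussian_eq_hermite_mul_gaussian]
    simp [mul_assoc]

lemma exists_G (d : ℕ) : ∃ G : 𝓢(Ed d, ℂ), ∀ x, G x = ((Real.exp (-‖x‖ ^ 4) : ℝ) : ℂ) := by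
  have hg : (fun x : Ed d => √2 * ‖x‖ ^ 2).HasTemperateGrowth :=
    (Function.HasTemperateGrowth.const (√2)).mul (Function.hasTemperateGrowth_norm_sq _)
  have hu : ∃ (k : ℕ) (C : ℝ), ∀ x : Ed d, ‖x‖ ≤ C * (1 + ‖√2 * ‖x‖ ^ 2‖) ^ k := by
    refine ⟨1, 1, fun x => ?_⟩
    have : (1:ℝ) ≤ √2 := by rw [Real.one_le_sqrt]; norm_num
    rw [Real.norm_of_nonneg (by positivity)]
    nlinarith [sq_nonneg (‖x‖ - 1), sq_nonneg ‖x‖]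
  refine ⟨SchwartzMap.postcompCLM Complex.ofRealCLM (SchwartzMap.compCLM ℝ hg hu gaussS), fun x => ?_⟩
  rw [SchwartzMap.postcompCLM_apply]
  change ((Real.exp (-((√2 * ‖x‖ ^ 2) ^ 2 / 2)) : ℝ) : ℂ) = _
  congr 2
  rw [mul_pow, Real.sq_sqrt (by norm_num)]
  ring

lemma comb5 {E : Type*} [MeasureSpace E] {a b c e f : E → ℂ} (ha : Integrable a) (hb : Integrable b)
    (hc : Integrable c) (he : Integrable e) (hf : Integrable f) :
    ∫ x, (a x + 2 * b x + 2 * c x - (1/2) * e x - (1/2) * f x) =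
      (∫ x, a x) + 2 * (∫ x, b x) + 2 * (∫ x, c x) - (1/2) * (∫ x, e x) - (1/2) * ∫ x, f x := by
  have h1 := ha.add (hb.const_mul 2)
  have h2 := h1.add (hc.const_mul 2)
  have h3 := h2.sub (he.const_mul (1/2))
  have h4 := integral_sub h3 (hf.const_mul (1/2))
  have h5 := integral_sub h2 (he.const_mul (1/2))
  have h6 := integral_add h1 (hc.const_mul 2)
  have h7 := integral_add ha (hb.const_mul 2)
  simp only [Pi.add_apply, Pi.sub_apply, integral_const_mul] at h4 h5 h6 h7
  rw [h4, h5, h6, h7]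

open scoped RealInnerProductSpace in
lemma key {d : ℕ} (hd : 1 ≤ d) (G F : 𝓢(Ed d, ℂ))
    (hG : ∀ x, G x = ((Real.exp (-‖x‖ ^ 4) : ℝ) : ℂ)) (hF : 𝓕 (F : Ed d → ℂ) = G) :
    1 < ∫ x, ‖F x‖ := by
  set s : ℝ := Real.log (10/9) with hs
  have hs0 : 0 ≤ s := Real.log_nonneg (by norm_num)
  obtain ⟨v, hv⟩ : ∃ v : Ed d, ‖v‖ ^ 4 = s := by
    refine ⟨EuclideanSpace.single ⟨0, hd⟩ (√(√s)), ?_⟩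
    rw [PiLp.norm_single, Real.norm_of_nonneg (by positivity)]
    rw [show (√√s)^4 = ((√√s)^2)^2 by ring, Real.sq_sqrt (by positivity), Real.sq_sqrt hs0]
  have hy : Real.exp (-s) = 9/10 := by
    rw [Real.exp_neg, hs, Real.exp_log (by norm_num)]; norm_num
  have hFT : ∀ w, ∫ x, Complex.exp ((↑(-2 * π * ⟪x, w⟫) * Complex.I)) * F x = ((Real.exp (-‖w‖ ^ 4) : ℝ) : ℂ) := by
    intro w
    rw [← hG, ← hF, Real.fourier_eq']; rfl
  have hI : ∀ w, Integrable (fun x => Complex.exp ((↑(-2 * π * ⟪x, w⟫) * Complex.I)) * F x) := by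
    intro w
    refine F.integrable.bdd_mul (c := 1) (by fun_prop) (ae_of_all _ fun x => ?_)
    rw [Complex.norm_exp_ofReal_mul_I]
  have e0 := hFT 0
  have e1 := hFT v
  have e1' := hFT (-v)
  have e2 := hFT ((2:ℝ) • v)
  have e2' := hFT (-((2:ℝ) • v))
  have n2 : ‖(2:ℝ) • v‖ ^ 4 = 16 * s := by rw [norm_smul, mul_pow, hv]; norm_num
  have x2 : Real.exp (-(16 * s)) = (9/10)^16 := by
    rw [← hy, ← Real.exp_nat_mul]; congr 1; push_cast; ring
  rw [hv, hy] at e1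
  rw [norm_neg, hv, hy] at e1'
  rw [n2, x2] at e2
  rw [norm_neg, n2, x2] at e2'
  have hpt : ∀ x, ((1 + 4 * Real.cos (2 * π * ⟪x, v⟫) - Real.cos (2 * (2 * π * ⟪x, v⟫)) : ℝ) : ℂ) * F x
      = Complex.exp ((↑(-2 * π * ⟪x, 0⟫) * Complex.I)) * F x
        + 2 * (Complex.exp ((↑(-2 * π * ⟪x, v⟫) * Complex.I)) * F x)
        + 2 * (Complex.exp ((↑(-2 * π * ⟪x, -v⟫) * Complex.I)) * F x)
        - (1/2) * (Complex.exp ((↑(-2 * π * ⟪x, (2:ℝ) • v⟫) * Complex.I)) * F x)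
        - (1/2) * (Complex.exp ((↑(-2 * π * ⟪x, -((2:ℝ) • v)⟫) * Complex.I)) * F x) := by
    intro x
    simp only [inner_neg_right, inner_smul_right, inner_zero_right]
    push_cast
    rw [Complex.cos, Complex.cos]
    simp only [mul_zero, zero_mul, Complex.exp_zero]
    ring_nf
  have hint : ∫ x, ((1 + 4 * Real.cos (2 * π * ⟪x, v⟫) - Real.cos (2 * (2 * π * ⟪x, v⟫)) : ℝ) : ℂ) * F x
      = ((1 + 4 * (9/10) - (9/10)^16 : ℝ) : ℂ) := by
    simp_rw [hpt]
    rw [comb5 (hI 0) (hI v) (hI (-v)) (hI ((2:ℝ) • v)) (hI (-((2:ℝ) • v))), e0, e1, e1', e2, e2']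
    norm_num
  have hle : ‖∫ x, ((1 + 4 * Real.cos (2 * π * ⟪x, v⟫) - Real.cos (2 * (2 * π * ⟪x, v⟫)) : ℝ) : ℂ) * F x‖
      ≤ ∫ x, 4 * ‖F x‖ := by
    refine norm_integral_le_of_norm_le (F.integrable.norm.const_mul 4) (ae_of_all _ fun x => ?_)
    rw [norm_mul, Complex.norm_real]
    gcongr
    rw [Real.cos_two_mul, Real.norm_eq_abs, abs_le]
    have h1 := Real.neg_one_le_cos (2 * π * ⟪x, v⟫)
    have h2 := Real.cos_le_one (2 * π * ⟪x, v⟫)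
    constructor <;> nlinarith
  rw [hint, Complex.norm_real, integral_const_mul, Real.norm_of_nonneg (by norm_num)] at hle
  norm_num at hle
  linarith

/-- Remark after Theorem 1.7: the inverse Fourier transform
`f = F⁻¹(e^{−|ξ|⁴})` on `ℝ^d` satisfies `∫_{ℝ^d} |f(x)| dx > 1`. -/
theorem stmt7 (d : ℕ) (hd : 1 ≤ d) : 1 < ∫ x : Ed d, ‖biKernel d x‖ := by
  obtain ⟨G, hG⟩ := exists_G d
  have hGc : 𝓕 ((𝓕⁻ G : 𝓢(Ed d, ℂ)) : Ed d → ℂ) = G := by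
    rw [← SchwartzMap.fourier_coe, FourierTransform.fourier_fourierInv_eq]
  have h := key hd G (𝓕⁻ G) hG hGc
  have hb : ∀ x, ‖biKernel d x‖ = ((2 * π) ^ d)⁻¹ * ‖(𝓕⁻ G : 𝓢(Ed d, ℂ)) ((2 * π)⁻¹ • x)‖ := by
    intro x
    rw [biKernel, norm_smul, Real.norm_of_nonneg (by positivity), SchwartzMap.fourierInv_coe,
      Real.fourierInv_eq']
    congr 2
    refine integral_congr_ae (ae_of_all _ fun ξ => ?_)
    simp only [hG, smul_eq_mul]
    rw [Complex.ofReal_exp, ← Complex.exp_add, inner_smul_right, ← mul_assoc,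
      mul_inv_cancel₀ (by positivity), one_mul, PiLp.inner_apply]
    congr 1
    simp only [RCLike.inner_apply, conj_trivial]
    push_cast
    rw [mul_comm Complex.I]
    simp_rw [mul_comm]
    ring
  simp_rw [hb]
  rw [integral_const_mul, Measure.integral_comp_inv_smul_of_nonneg volume
    (fun x => ‖(𝓕⁻ G : 𝓢(Ed d, ℂ)) x‖) (by positivity), finrank_euclideanSpace_fin, smul_eq_mul,
    ← mul_assoc, inv_mul_cancel₀ (by positivity), one_mul]
  exact h
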